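/- (Cocycle property of U.) Fix c ∈ ℂ. Let Φ = (w₁,w₂) : Ω → Ω' and Ψ = (u₁,u₂) : Ω' → Ω'' be holomorphic maps between open subsets of ℂ² such that the Jacobian D(Φ) := ∂ₓw₁∂ᵧw₂ − ∂ₓw₂∂ᵧw₁ and J(w₁,w₂) are nonzero on Ω, and the corresponding quantities for Ψ on Ω' and for Ψ∘Φ on Ω are nonzero. For a map Θ of (s,t) define the 5×5 block matrix U_Θ := [[M(Θ;s,t), c·D(Θ)·V(Θ)],[0, D(Θ)]], where D(Θ) is the Jacobian determinant of Θ and V(Θ) is the column vector of the four GL(3) derivatives ({Θ₁,Θ₂;s,t}_s, {Θ₁,Θ₂;s,t}_t, [Θ₁,Θ₂;s,t]_s, [Θ₁,Θ₂;s,t]_t)ᵀ. Then at every p ∈ Ω: U_Φ(p) · U_Ψ(Φ(p)) = U_{Ψ∘Φ}(p). -/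

import Mathlib

open Complex Matrix

noncomputable section

/-- Partial derivative in the first complex variable. -/
def pdx (f : ℂ × ℂ → ℂ) (p : ℂ × ℂ) : ℂ := deriv (fun x => f (x, p.2)) p.1

/-- Partial derivative in the second complex variable. -/
def pdy (f : ℂ × ℂ → ℂ) (p : ℂ × ℂ) : ℂ := deriv (fun y => f (p.1, y)) p.2

/-- The Jacobian `J(u₁,u₂) = ∂ₓu₁·∂ᵧu₂ − ∂ₓu₂·∂ᵧu₁`. -/
def Jac (u₁ u₂ : ℂ × ℂ → ℂ) (p : ℂ × ℂ) : ℂ :=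
  pdx u₁ p * pdy u₂ p - pdx u₂ p * pdy u₁ p

/-- The GL(3) derivative `{u₁,u₂;x,y}ₓ`. -/
def brX (u₁ u₂ : ℂ × ℂ → ℂ) (p : ℂ × ℂ) : ℂ :=
  (pdx u₁ p * pdx (pdx u₂) p - pdx u₂ p * pdx (pdx u₁) p) / Jac u₁ u₂ p

/-- The GL(3) derivative `{u₁,u₂;x,y}ᵧ`. -/
def brY (u₁ u₂ : ℂ × ℂ → ℂ) (p : ℂ × ℂ) : ℂ :=
  -(pdy u₁ p * pdy (pdy u₂) p - pdy u₂ p * pdy (pdy u₁) p) / Jac u₁ u₂ p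

/-- The GL(3) derivative `[u₁,u₂;x,y]ₓ`. -/
def sqX (u₁ u₂ : ℂ × ℂ → ℂ) (p : ℂ × ℂ) : ℂ :=
  ((pdy u₁ p * pdx (pdx u₂) p - pdy u₂ p * pdx (pdx u₁) p)
      + 2 * (pdx u₁ p * pdx (pdy u₂) p - pdx u₂ p * pdx (pdy u₁) p)) / Jac u₁ u₂ p

/-- The GL(3) derivative `[u₁,u₂;x,y]ᵧ`. -/
def sqY (u₁ u₂ : ℂ × ℂ → ℂ) (p : ℂ × ℂ) : ℂ :=
  -((pdx u₁ p * pdy (pdy u₂) p - pdx u₂ p * pdy (pdy u₁) p)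
      + 2 * (pdy u₁ p * pdx (pdy u₂) p - pdy u₂ p * pdx (pdy u₁) p)) / Jac u₁ u₂ p

/-- The 4×4 matrix `M(w₁,w₂;x,y)` built from the first partial derivatives of
the holomorphic map `(w₁,w₂)`. -/
def Mmat (w₁ w₂ : ℂ × ℂ → ℂ) (p : ℂ × ℂ) : Matrix (Fin 4) (Fin 4) ℂ :=
  !![(pdx w₁ p) ^ 3, -(pdx w₂ p) ^ 3, (pdx w₁ p) ^ 2 * pdx w₂ p,
        -(pdx w₁ p) * (pdx w₂ p) ^ 2;
     -(pdy w₁ p) ^ 3, (pdy w₂ p) ^ 3, -(pdy w₁ p) ^ 2 * pdy w₂ p,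
        (pdy w₁ p) * (pdy w₂ p) ^ 2;
     3 * (pdx w₁ p) ^ 2 * pdy w₁ p, -3 * (pdx w₂ p) ^ 2 * pdy w₂ p,
        (pdx w₁ p) ^ 2 * pdy w₂ p + 2 * pdx w₁ p * pdx w₂ p * pdy w₁ p,
        -(pdx w₂ p) ^ 2 * pdy w₁ p - 2 * pdx w₁ p * pdx w₂ p * pdy w₂ p;
     -3 * pdx w₁ p * (pdy w₁ p) ^ 2, 3 * pdx w₂ p * (pdy w₂ p) ^ 2,
        -(pdx w₂ p) * (pdy w₁ p) ^ 2 - 2 * pdx w₁ p * pdy w₁ p * pdy w₂ p,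
        (pdx w₁ p) * (pdy w₂ p) ^ 2 + 2 * pdx w₂ p * pdy w₁ p * pdy w₂ p]

/-- The column vector of the four GL(3) derivatives of the pair `(u₁,u₂)`. -/
def Vvec (u₁ u₂ : ℂ × ℂ → ℂ) (p : ℂ × ℂ) : Fin 4 → ℂ :=
  ![brX u₁ u₂ p, brY u₁ u₂ p, sqX u₁ u₂ p, sqY u₁ u₂ p]

/-- The 5×5 block matrix `U_Θ = [[M(Θ), c·D(Θ)·V(Θ)], [0, D(Θ)]]`. -/
def Umat (c : ℂ) (w₁ w₂ : ℂ × ℂ → ℂ) (p : ℂ × ℂ) : Matrix (Fin 5) (Fin 5) ℂ :=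
  Matrix.of fun i j =>
    if hi : (i : ℕ) < 4 then
      if hj : (j : ℕ) < 4 then Mmat w₁ w₂ p ⟨i, hi⟩ ⟨j, hj⟩
      else c * Jac w₁ w₂ p * Vvec w₁ w₂ p ⟨i, hi⟩
    else if (j : ℕ) < 4 then 0 else Jac w₁ w₂ p

/-!
The numerators of the four derivatives in `V(Θ)` are, up to sign, the coefficients of the binary
cubic `C_Θ(ξ) = det (Θ'(ξ), Θ''(ξ, ξ))`. The chain rule for second derivatives,
`(Ψ ∘ Φ)''(ξ, ξ) = Ψ''(Φ'ξ, Φ'ξ) + Ψ'(Φ''(ξ, ξ))`, gives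
`C_{Ψ ∘ Φ}(ξ) = C_Ψ(Φ'ξ) + D(Ψ) C_Φ(ξ)`, while `M(Φ)` is the matrix of the substitution `ξ ↦ Φ'ξ`
on binary cubics. Comparing coefficients, `M` is multiplicative and
`D(Ψ ∘ Φ) V(Ψ ∘ Φ) = M(Φ) (D(Ψ) V(Ψ)) + D(Ψ) D(Φ) V(Φ)`, which is the upper right block of the
cocycle identity.

Complex differentiability on an open set is only assumed to first order, so the second derivatives
have to be constructed. The Schwarz lemma bounds the first order Taylor remainder quadratically on
balls; hence the difference quotients in a direction `v` converge to `f' v` locally uniformly, so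
that `f' v` is holomorphic by Weierstrass, and one iterates.
-/

open Filter Metric Set Topology

section Holomorphic

variable {E F : Type*} [NormedAddCommGroup E] [NormedSpace ℂ E]
  [NormedAddCommGroup F] [NormedSpace ℂ F] {f : E → F} {U : Set E} {c z : E} {M R : ℝ}

theorem norm_fderiv_le_of_forall_mem_ball_norm_le (hf : DifferentiableOn ℂ f (ball c R))
    (hM : ∀ w ∈ ball c R, ‖f w‖ ≤ M) (hR : 0 < R) : ‖fderiv ℂ f c‖ ≤ 2 * M / R := by
  refine norm_fderiv_le_div_of_mapsTo_ball hf (fun w hw => ?_) hR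
  rw [mem_closedBall, two_mul]
  exact (dist_le_norm_add_norm _ _).trans (add_le_add (hM w hw) (hM c (mem_ball_self hR)))

theorem norm_sub_sub_fderiv_le_mul_sq (hf : DifferentiableOn ℂ f (ball c R))
    (hM : ∀ w ∈ ball c R, ‖f w‖ ≤ M) (hz : z ∈ ball c R) :
    ‖f z - f c - fderiv ℂ f c (z - c)‖ ≤ 4 * M * (‖z - c‖ / R) ^ 2 := by
  have hR : 0 < R := nonempty_ball.1 ⟨z, hz⟩
  let remainder : E → F := fun w => f w - f c - fderiv ℂ f c (w - c)
  have hzero : remainder c = 0 := by simp [remainder]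
  have hdiff : DifferentiableOn ℂ remainder (ball c R) := by fun_prop
  have hlittle : (fun w => remainder w - remainder c) =o[𝓝 c] fun w => ‖w - c‖ ^ 1 := by
    have hfc := (hf.differentiableAt (ball_mem_nhds c hR)).hasFDerivAt.isLittleO
    simpa only [hzero, sub_zero, pow_one] using hfc.norm_right
  have hmaps : MapsTo remainder (ball c R) (closedBall (remainder c) (4 * M)) := by
    intro w hw
    have hlinear : ‖fderiv ℂ f c (w - c)‖ ≤ 2 * M := by
      have hderiv := norm_fderiv_le_of_forall_mem_ball_norm_le hf hM hR
      calc ‖fderiv ℂ f c (w - c)‖ ≤ 2 * M / R * R :=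
            (fderiv ℂ f c).le_of_opNorm_le_of_le hderiv (mem_ball_iff_norm.1 hw).le
        _ = 2 * M := div_mul_cancel₀ _ hR.ne'
    rw [hzero, mem_closedBall_zero_iff]
    linarith [norm_sub_le (f w - f c) (fderiv ℂ f c (w - c)), norm_sub_le (f w) (f c),
      hM w hw, hM c (mem_ball_self hR)]
  simpa [hzero, dist_eq_norm, remainder] using
    dist_le_mul_div_pow_of_mapsTo_ball_of_isLittleO hdiff hmaps hlittle hz

theorem uniformCauchySeqOn_fderiv {ι : Type*} {l : Filter ι} {G : ι → E → F} {r : ℝ}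
    (hG : UniformCauchySeqOn G l (ball c (R + r)))
    (hdiff : ∀ᶠ i in l, DifferentiableOn ℂ (G i) (ball c (R + r))) (hr : 0 < r) :
    UniformCauchySeqOn (fun i => fderiv ℂ (G i)) l (ball c R) := by
  intro u hu
  obtain ⟨ε, hε, hεu⟩ := Metric.mem_uniformity_dist.1 hu
  filter_upwards [hG _ (Metric.dist_mem_uniformity (show 0 < r * ε / 4 by positivity)),
    hdiff.prod_mk hdiff] with ⟨i, j⟩ hclose ⟨hi, hj⟩ w hw
  have hsub : ball w r ⊆ ball c (R + r) := ball_subset_ball' (by linarith [mem_ball.1 hw])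
  have hnhds : ball c (R + r) ∈ 𝓝 w := isOpen_ball.mem_nhds (hsub (mem_ball_self hr))
  apply hεu
  calc dist (fderiv ℂ (G i) w) (fderiv ℂ (G j) w) = ‖fderiv ℂ (G i - G j) w‖ := by
        rw [fderiv_sub (hi.differentiableAt hnhds) (hj.differentiableAt hnhds), dist_eq_norm]
    _ ≤ 2 * (r * ε / 4) / r :=
        norm_fderiv_le_of_forall_mem_ball_norm_le ((hi.sub hj).mono hsub)
          (fun z hz => (dist_eq_norm (G i z) (G j z)).symm.trans_le (hclose z (hsub hz)).le) hr
    _ = ε / 2 := by field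
    _ < ε := half_lt_self hε

theorem differentiableOn_of_tendstoUniformlyOn [CompleteSpace F] {ι : Type*} {l : Filter ι}
    [l.NeBot] {G : ι → E → F} {g : E → F} (hG : TendstoUniformlyOn G g l U)
    (hdiff : ∀ᶠ i in l, DifferentiableOn ℂ (G i) U) (hU : IsOpen U) :
    DifferentiableOn ℂ g U := by
  intro p hp
  obtain ⟨δ, hδ, hball⟩ := Metric.isOpen_iff.1 hU p hp
  have hhalf : 0 < δ / 2 := half_pos hδ
  have hsub : ball p (δ / 2 + δ / 2) ⊆ U := by rwa [add_halves]
  have hcauchy : UniformCauchySeqOn (fun i => fderiv ℂ (G i)) l (ball p (δ / 2)) :=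
    uniformCauchySeqOn_fderiv (hG.mono hsub).uniformCauchySeqOn
      (hdiff.mono fun i hi => hi.mono hsub) hhalf
  choose! g' hg' using fun w hw => cauchy_map_iff_exists_tendsto.1 (hcauchy.cauchy_map (x := w) hw)
  have hlimit : HasFDerivAt g (g' p) p := by
    have hnhds : ball p (δ / 2) ∈ 𝓝 p := ball_mem_nhds p hhalf
    have hnhdsU : U ∈ 𝓝 p := hU.mem_nhds hp
    refine hasFDerivAt_of_tendstoUniformlyOnFilter
      ((hcauchy.tendstoUniformlyOn_of_tendsto hg').tendstoUniformlyOnFilter.mono_right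
        (le_principal_iff.2 hnhds)) ?_ (eventually_of_mem hnhdsU fun w hw => hG.tendsto_at hw)
    filter_upwards [hdiff.prod_mk (hU.eventually_mem hp)] with ⟨i, w⟩ ⟨hi, hw⟩
    exact (hi.differentiableAt (hU.mem_nhds hw)).hasFDerivAt
  exact hlimit.differentiableAt.differentiableWithinAt

theorem eventually_norm_smul_lt {r : ℝ} (hr : 0 < r) (v : E) :
    ∀ᶠ t : ℂ in 𝓝[≠] 0, ‖t • v‖ < r :=
  nhdsWithin_le_nhds ((Continuous.tendsto' (by fun_prop) 0 0 (by simp)).eventually_lt_const hr)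

theorem tendstoUniformlyOn_inv_smul_sub {r : ℝ} (hf : DifferentiableOn ℂ f (ball c (R + r)))
    (hM : ∀ w ∈ ball c (R + r), ‖f w‖ ≤ M) (hr : 0 < r) (v : E) :
    TendstoUniformlyOn (fun (t : ℂ) w => t⁻¹ • (f (w + t • v) - f w)) (fun w => fderiv ℂ f w v)
      (𝓝[≠] 0) (ball c R) := by
  let bound : ℂ → ℝ := fun t => 4 * M * (‖v‖ / r) ^ 2 * ‖t‖
  have hbound : Tendsto bound (𝓝[≠] 0) (𝓝 0) :=
    (Continuous.tendsto' (by fun_prop) 0 0 (by simp [bound])).mono_left nhdsWithin_le_nhds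
  rw [Metric.tendstoUniformlyOn_iff]
  intro ε hε
  filter_upwards [eventually_norm_smul_lt hr v, hbound.eventually_lt_const hε,
    self_mem_nhdsWithin] with t ht htε ht₀ w hw
  have hsub : ball w r ⊆ ball c (R + r) := ball_subset_ball' (by linarith [mem_ball.1 hw])
  have htaylor := norm_sub_sub_fderiv_le_mul_sq (z := w + t • v) (hf.mono hsub)
    (fun z hz => hM z (hsub hz)) (by simpa [mem_ball_iff_norm] using ht)
  calc dist (fderiv ℂ f w v) (t⁻¹ • (f (w + t • v) - f w))
      = ‖t‖⁻¹ * ‖f (w + t • v) - f w - fderiv ℂ f w (t • v)‖ := by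
        rw [dist_comm, dist_eq_norm, ← norm_inv, ← norm_smul, map_smul,
          smul_sub _ (_ - _), inv_smul_smul₀ ht₀]
    _ ≤ ‖t‖⁻¹ * (4 * M * (‖t • v‖ / r) ^ 2) := by
        gcongr
        simpa using htaylor
    _ = bound t := by
        have : ‖t‖ ≠ 0 := norm_ne_zero_iff.2 ht₀
        simp only [bound, norm_smul]
        field
    _ < ε := htε

theorem differentiableOn_fderiv_apply [CompleteSpace F] (hf : DifferentiableOn ℂ f U)
    (hU : IsOpen U) (v : E) : DifferentiableOn ℂ (fun z => fderiv ℂ f z v) U := by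
  intro p hp
  obtain ⟨δ, hδ, hball⟩ : ∃ δ > 0, ∀ z ∈ ball p δ, z ∈ U ∧ ‖f z‖ < ‖f p‖ + 1 := by
    have hcont : ContinuousAt f p := hf.continuousOn.continuousAt (hU.mem_nhds hp)
    exact Metric.eventually_nhds_iff_ball.1 <| (hU.eventually_mem hp).and <|
      hcont.norm.tendsto.eventually_lt_const (lt_add_one _)
  obtain ⟨r, hr, hrδ⟩ : ∃ r > 0, r + r = δ := ⟨δ / 2, half_pos hδ, add_halves δ⟩
  subst hrδ
  have hdiff : DifferentiableOn ℂ f (ball p (r + r)) := hf.mono fun z hz => (hball z hz).1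
  have hquotient : ∀ᶠ t : ℂ in 𝓝[≠] 0,
      DifferentiableOn ℂ (fun w => t⁻¹ • (f (w + t • v) - f w)) (ball p r) := by
    filter_upwards [eventually_norm_smul_lt hr v] with t ht
    have hshift : MapsTo (fun w => w + t • v) (ball p r) (ball p (r + r)) := fun w hw => by
      rw [mem_ball_iff_norm, add_sub_right_comm]
      exact (norm_add_le _ _).trans_lt (add_lt_add (mem_ball_iff_norm.1 hw) ht)
    exact ((hdiff.comp (by fun_prop) hshift).sub
      (hdiff.mono (ball_subset_ball (by linarith)))).const_smul _
  have hlimit := differentiableOn_of_tendstoUniformlyOn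
    (tendstoUniformlyOn_inv_smul_sub hdiff (fun z hz => (hball z hz).2.le) hr v)
    hquotient isOpen_ball
  exact (hlimit.differentiableAt (ball_mem_nhds p hr)).differentiableWithinAt

theorem contDiffOn_of_differentiableOn_of_isOpen [FiniteDimensional ℂ E] [CompleteSpace F]
    (hf : DifferentiableOn ℂ f U) (hU : IsOpen U) (n : ℕ) : ContDiffOn ℂ n f U := by
  induction n generalizing f with
  | zero => exact contDiffOn_zero.2 hf.continuousOn
  | succ n ih =>
    rw [Nat.cast_succ, contDiffOn_succ_iff_fderiv_of_isOpen hU]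
    refine ⟨hf, fun hω => (WithTop.natCast_ne_top n hω).elim, contDiffOn_clm_apply.2 ?_⟩
    exact fun v => ih (differentiableOn_fderiv_apply hf hU v)

end Holomorphic

section AreaForm

variable {R : Type*} [CommRing R]

/-- The standard area form on the plane, i.e. the determinant with columns `x` and `y`. -/
def areaForm (x y : R × R) : R :=
  x.1 * y.2 - x.2 * y.1

theorem areaForm_add_right (x y z : R × R) :
    areaForm x (y + z) = areaForm x y + areaForm x z := by
  simp only [areaForm, Prod.fst_add, Prod.snd_add]
  ring

theorem areaForm_map (A : R × R →ₗ[R] R × R) (x y : R × R) :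
    areaForm (A x) (A y) = areaForm (A (1, 0)) (A (0, 1)) * areaForm x y := by
  have hA (z : R × R) : A z = z.1 • A (1, 0) + z.2 • A (0, 1) := by
    rw [← map_smul, ← map_smul, ← map_add]
    simp
  simp only [hA x, hA y, areaForm, Prod.fst_add, Prod.snd_add, Prod.smul_fst, Prod.smul_snd,
    smul_eq_mul]
  ring

end AreaForm

section CubicMonomials

/-- The monomials of degree three in `ξ`. The order, and the signs of the second and fourth one, are
chosen so that `cubicMonomials ξ ⬝ᵥ (J • V)` is the inflection cubic at `ξ`. -/
def cubicMonomials {R : Type*} [CommRing R] (ξ : R × R) : Fin 4 → R :=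
  ![ξ.1 ^ 3, -ξ.2 ^ 3, ξ.1 ^ 2 * ξ.2, -(ξ.1 * ξ.2 ^ 2)]

theorem cubicMonomials_dotProduct {R : Type*} [CommRing R] (ξ : R × R) (v : Fin 4 → R) :
    cubicMonomials ξ ⬝ᵥ v =
      ξ.1 ^ 3 * v 0 - ξ.2 ^ 3 * v 1 + ξ.1 ^ 2 * ξ.2 * v 2 - ξ.1 * ξ.2 ^ 2 * v 3 := by
  simp only [dotProduct, Fin.sum_univ_four, cubicMonomials, cons_val]
  ring

theorem eq_of_forall_cubicMonomials_dotProduct_eq {K : Type*} [Field K] [NeZero (2 : K)]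
    {v w : Fin 4 → K} (h : ∀ ξ, cubicMonomials ξ ⬝ᵥ v = cubicMonomials ξ ⬝ᵥ w) : v = w := by
  simp only [cubicMonomials_dotProduct] at h
  have h₀ : v 0 = w 0 := by simpa using h (1, 0)
  have h₁ : v 1 = w 1 := by simpa using h (0, 1)
  have hadd := h (1, 1)
  have hsub := h (1, -1)
  have h₂ : v 2 = w 2 := mul_left_cancel₀ two_ne_zero (by linear_combination hadd - hsub + 2 * h₁)
  have h₃ : v 3 = w 3 := by linear_combination -hadd + h₀ - h₁ + h₂
  ext i
  fin_cases i <;> assumption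

theorem eq_of_forall_cubicMonomials_vecMul_eq {K ι : Type*} [Field K] [NeZero (2 : K)]
    {A B : Matrix (Fin 4) ι K} (h : ∀ ξ, cubicMonomials ξ ᵥ* A = cubicMonomials ξ ᵥ* B) :
    A = B := by
  ext i j
  exact congrFun (eq_of_forall_cubicMonomials_dotProduct_eq (v := fun i => A i j)
    (w := fun i => B i j) fun ξ => congrFun (h ξ) j) i

end CubicMonomials

section SecondDerivative

variable {𝕜 E F G : Type*} [NontriviallyNormedField 𝕜] [NormedAddCommGroup E] [NormedSpace 𝕜 E]
  [NormedAddCommGroup F] [NormedSpace 𝕜 F] [NormedAddCommGroup G] [NormedSpace 𝕜 G] {p : E}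

theorem differentiableAt_fderiv_of_contDiffAt_two {f : E → F} (hf : ContDiffAt 𝕜 2 f p) :
    DifferentiableAt 𝕜 (fderiv 𝕜 f) p :=
  (hf.fderiv_right (m := 1) (by norm_num)).differentiableAt one_ne_zero

theorem eventually_differentiableAt_of_contDiffAt_two {f : E → F} (hf : ContDiffAt 𝕜 2 f p) :
    ∀ᶠ q in 𝓝 p, DifferentiableAt 𝕜 f q :=
  (hf.eventually (by simp)).mono fun _ hq => hq.differentiableAt two_ne_zero

theorem fderiv_fderiv_comp_apply {f : E → F} {g : F → G} (hg : ContDiffAt 𝕜 2 g (f p))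
    (hf : ContDiffAt 𝕜 2 f p) (v w : E) :
    fderiv 𝕜 (fderiv 𝕜 fun q => g (f q)) p v w =
      fderiv 𝕜 (fderiv 𝕜 g) (f p) (fderiv 𝕜 f p v) (fderiv 𝕜 f p w) +
        fderiv 𝕜 g (f p) (fderiv 𝕜 (fderiv 𝕜 f) p v w) := by
  have hfp : DifferentiableAt 𝕜 f p := hf.differentiableAt two_ne_zero
  have hdf := differentiableAt_fderiv_of_contDiffAt_two hf
  have hdg := differentiableAt_fderiv_of_contDiffAt_two hg
  have hchain : fderiv 𝕜 (fun q => g (f q)) =ᶠ[𝓝 p]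
      fun q => (fderiv 𝕜 g (f q)).comp (fderiv 𝕜 f q) := by
    filter_upwards [eventually_differentiableAt_of_contDiffAt_two hf,
      hfp.continuousAt.eventually (eventually_differentiableAt_of_contDiffAt_two hg)] with q hfq hgq
    exact fderiv_comp q hgq hfq
  have hcomp : DifferentiableAt 𝕜 (fun q => fderiv 𝕜 g (f q)) p := hdg.comp p hfp
  rw [hchain.fderiv_eq, fderiv_clm_comp hcomp hdf, fderiv_fun_comp p hdg hfp, add_comm]
  rfl

theorem fderiv_fderiv_prodMk_apply {f : E → F} {g : E → G} (hf : ContDiffAt 𝕜 2 f p)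
    (hg : ContDiffAt 𝕜 2 g p) (v w : E) :
    fderiv 𝕜 (fderiv 𝕜 fun q => (f q, g q)) p v w =
      (fderiv 𝕜 (fderiv 𝕜 f) p v w, fderiv 𝕜 (fderiv 𝕜 g) p v w) := by
  have hpair : (fderiv 𝕜 fun q => (f q, g q)) =ᶠ[𝓝 p]
      fun q => (fderiv 𝕜 f q).prod (fderiv 𝕜 g q) := by
    filter_upwards [eventually_differentiableAt_of_contDiffAt_two hf,
      eventually_differentiableAt_of_contDiffAt_two hg] with q hfq hgq
    exact hfq.fderiv_prodMk hgq
  have hderiv := (differentiableAt_fderiv_of_contDiffAt_two hf).hasFDerivAt.prodMk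
    (differentiableAt_fderiv_of_contDiffAt_two hg).hasFDerivAt
  have hprodL := (ContinuousLinearMap.prodL (𝕜 := 𝕜) (E := E) (F := F) (G := G)
    𝕜).comp_hasFDerivAt_iff.2 hderiv
  rw [(hprodL.congr_of_eventuallyEq hpair).fderiv]
  rfl

/-- The cubic form `ξ ↦ det (Θ'(ξ), Θ''(ξ, ξ))` attached to a map `Θ` into the plane. It vanishes
at `ξ` exactly when the first two derivatives of the curve `t ↦ Θ (p + t ξ)` are linearly dependent
at `t = 0`. -/
def inflectionCubic (Θ : E → 𝕜 × 𝕜) (p ξ : E) : 𝕜 :=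
  areaForm (fderiv 𝕜 Θ p ξ) (fderiv 𝕜 (fderiv 𝕜 Θ) p ξ ξ)

theorem inflectionCubic_comp {Φ : E → 𝕜 × 𝕜} {Ψ : 𝕜 × 𝕜 → 𝕜 × 𝕜}
    (hΨ : ContDiffAt 𝕜 2 Ψ (Φ p)) (hΦ : ContDiffAt 𝕜 2 Φ p) (ξ : E) :
    inflectionCubic (fun q => Ψ (Φ q)) p ξ =
      inflectionCubic Ψ (Φ p) (fderiv 𝕜 Φ p ξ) +
        areaForm (fderiv 𝕜 Ψ (Φ p) (1, 0)) (fderiv 𝕜 Ψ (Φ p) (0, 1)) * inflectionCubic Φ p ξ := by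
  have hchain : fderiv 𝕜 (fun q => Ψ (Φ q)) p ξ = fderiv 𝕜 Ψ (Φ p) (fderiv 𝕜 Φ p ξ) := by
    rw [fderiv_fun_comp p (hΨ.differentiableAt two_ne_zero) (hΦ.differentiableAt two_ne_zero)]
    rfl
  simp only [inflectionCubic]
  rw [hchain, fderiv_fderiv_comp_apply hΨ hΦ, areaForm_add_right]
  exact congrArg _ (areaForm_map (fderiv 𝕜 Ψ (Φ p)).toLinearMap _ _)

end SecondDerivative

section PartialDerivatives

variable {u u₁ u₂ w₁ w₂ : ℂ × ℂ → ℂ} {p : ℂ × ℂ}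

theorem pdx_eq_fderiv (hu : DifferentiableAt ℂ u p) : pdx u p = fderiv ℂ u p (1, 0) := by
  have hline : HasDerivAt (fun x : ℂ => (x, p.2)) (1, 0) p.1 :=
    (hasDerivAt_id p.1).prodMk (hasDerivAt_const p.1 p.2)
  exact (HasFDerivAt.comp_hasDerivAt (f := fun x : ℂ => (x, p.2)) p.1 hu.hasFDerivAt hline).deriv

theorem pdy_eq_fderiv (hu : DifferentiableAt ℂ u p) : pdy u p = fderiv ℂ u p (0, 1) := by
  have hline : HasDerivAt (fun y : ℂ => (p.1, y)) (0, 1) p.2 :=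
    (hasDerivAt_const p.2 p.1).prodMk (hasDerivAt_id p.2)
  exact (HasFDerivAt.comp_hasDerivAt (f := fun y : ℂ => (p.1, y)) p.2 hu.hasFDerivAt hline).deriv

theorem fderiv_apply_eq_pdx_pdy (hu : DifferentiableAt ℂ u p) (ξ : ℂ × ℂ) :
    fderiv ℂ u p ξ = pdx u p * ξ.1 + pdy u p * ξ.2 := by
  have hξ : ξ = ξ.1 • ((1, 0) : ℂ × ℂ) + ξ.2 • ((0, 1) : ℂ × ℂ) := by simp
  conv_lhs => rw [hξ, map_add, map_smul, map_smul, ← pdx_eq_fderiv hu, ← pdy_eq_fderiv hu]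
  simp only [smul_eq_mul, mul_comm]

theorem pdx_eventuallyEq_fderiv (hu : ContDiffAt ℂ 2 u p) :
    pdx u =ᶠ[𝓝 p] fun q => fderiv ℂ u q (1, 0) :=
  (eventually_differentiableAt_of_contDiffAt_two hu).mono fun _ hq => pdx_eq_fderiv hq

theorem pdy_eventuallyEq_fderiv (hu : ContDiffAt ℂ 2 u p) :
    pdy u =ᶠ[𝓝 p] fun q => fderiv ℂ u q (0, 1) :=
  (eventually_differentiableAt_of_contDiffAt_two hu).mono fun _ hq => pdy_eq_fderiv hq

theorem hasFDerivAt_of_eventuallyEq_fderiv_apply {g : ℂ × ℂ → ℂ} {v : ℂ × ℂ}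
    (hu : ContDiffAt ℂ 2 u p) (hg : g =ᶠ[𝓝 p] fun q => fderiv ℂ u q v) :
    HasFDerivAt g ((fderiv ℂ (fderiv ℂ u) p).flip v) p :=
  (((differentiableAt_fderiv_of_contDiffAt_two hu).hasFDerivAt.clm_apply
    (hasFDerivAt_const v p)).congr_of_eventuallyEq hg).congr_fderiv (by ext <;> simp)

theorem pdx_pdx_eq_fderiv_fderiv (hu : ContDiffAt ℂ 2 u p) :
    pdx (pdx u) p = fderiv ℂ (fderiv ℂ u) p (1, 0) (1, 0) := by
  have h := hasFDerivAt_of_eventuallyEq_fderiv_apply hu (pdx_eventuallyEq_fderiv hu)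
  rw [pdx_eq_fderiv h.differentiableAt, h.fderiv]
  rfl

theorem pdx_pdy_eq_fderiv_fderiv (hu : ContDiffAt ℂ 2 u p) :
    pdx (pdy u) p = fderiv ℂ (fderiv ℂ u) p (1, 0) (0, 1) := by
  have h := hasFDerivAt_of_eventuallyEq_fderiv_apply hu (pdy_eventuallyEq_fderiv hu)
  rw [pdx_eq_fderiv h.differentiableAt, h.fderiv]
  rfl

theorem pdy_pdy_eq_fderiv_fderiv (hu : ContDiffAt ℂ 2 u p) :
    pdy (pdy u) p = fderiv ℂ (fderiv ℂ u) p (0, 1) (0, 1) := by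
  have h := hasFDerivAt_of_eventuallyEq_fderiv_apply hu (pdy_eventuallyEq_fderiv hu)
  rw [pdy_eq_fderiv h.differentiableAt, h.fderiv]
  rfl

theorem fderiv_fderiv_apply_self (hu : ContDiffAt ℂ 2 u p) (ξ : ℂ × ℂ) :
    fderiv ℂ (fderiv ℂ u) p ξ ξ =
      pdx (pdx u) p * ξ.1 ^ 2 + 2 * pdx (pdy u) p * (ξ.1 * ξ.2) + pdy (pdy u) p * ξ.2 ^ 2 := by
  have hξ : ξ = ξ.1 • ((1, 0) : ℂ × ℂ) + ξ.2 • ((0, 1) : ℂ × ℂ) := by simp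
  have hsymm : fderiv ℂ (fderiv ℂ u) p (0, 1) (1, 0) = fderiv ℂ (fderiv ℂ u) p (1, 0) (0, 1) :=
    hu.isSymmSndFDerivAt (by simp) _ _
  rw [pdx_pdx_eq_fderiv_fderiv hu, pdx_pdy_eq_fderiv_fderiv hu, pdy_pdy_eq_fderiv_fderiv hu]
  conv_lhs => rw [hξ]
  simp only [map_add, map_smul, _root_.add_apply, _root_.smul_apply,
    smul_eq_mul, hsymm]
  ring

theorem fderiv_prodMk_apply (hw : DifferentiableAt ℂ (fun q => (w₁ q, w₂ q)) p) (ξ : ℂ × ℂ) :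
    fderiv ℂ (fun q => (w₁ q, w₂ q)) p ξ =
      (pdx w₁ p * ξ.1 + pdy w₁ p * ξ.2, pdx w₂ p * ξ.1 + pdy w₂ p * ξ.2) := by
  have h₁ : DifferentiableAt ℂ w₁ p := hw.fst
  have h₂ : DifferentiableAt ℂ w₂ p := hw.snd
  rw [h₁.fderiv_prodMk h₂, ContinuousLinearMap.prod_apply, fderiv_apply_eq_pdx_pdy h₁,
    fderiv_apply_eq_pdx_pdy h₂]

theorem Jac_eq_areaForm (hw : DifferentiableAt ℂ (fun q => (w₁ q, w₂ q)) p) :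
    Jac w₁ w₂ p = areaForm (fderiv ℂ (fun q => (w₁ q, w₂ q)) p (1, 0))
      (fderiv ℂ (fun q => (w₁ q, w₂ q)) p (0, 1)) := by
  simp only [fderiv_prodMk_apply hw, Jac, areaForm]
  ring

theorem fderiv_comp_prodMk_apply (hw : DifferentiableAt ℂ (fun q => (w₁ q, w₂ q)) p)
    (hu : DifferentiableAt ℂ (fun q => (u₁ q, u₂ q)) (w₁ p, w₂ p)) (ξ : ℂ × ℂ) :
    fderiv ℂ (fun q => (u₁ (w₁ q, w₂ q), u₂ (w₁ q, w₂ q))) p ξ =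
      fderiv ℂ (fun q => (u₁ q, u₂ q)) (w₁ p, w₂ p) (fderiv ℂ (fun q => (w₁ q, w₂ q)) p ξ) :=
  congrArg (· ξ) (fderiv_fun_comp p hu hw)

theorem Jac_comp (hw : DifferentiableAt ℂ (fun q => (w₁ q, w₂ q)) p)
    (hu : DifferentiableAt ℂ (fun q => (u₁ q, u₂ q)) (w₁ p, w₂ p)) :
    Jac (fun q => u₁ (w₁ q, w₂ q)) (fun q => u₂ (w₁ q, w₂ q)) p =
      Jac u₁ u₂ (w₁ p, w₂ p) * Jac w₁ w₂ p := by
  have huw : DifferentiableAt ℂ (fun q => (u₁ (w₁ q, w₂ q), u₂ (w₁ q, w₂ q))) p := hu.comp p hw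
  rw [Jac_eq_areaForm hw, Jac_eq_areaForm hu, Jac_eq_areaForm huw]
  simp only [fderiv_comp_prodMk_apply hw hu]
  exact areaForm_map (fderiv ℂ (fun q => (u₁ q, u₂ q)) (w₁ p, w₂ p)).toLinearMap _ _

theorem cubicMonomials_vecMul_Mmat (hw : DifferentiableAt ℂ (fun q => (w₁ q, w₂ q)) p)
    (ξ : ℂ × ℂ) :
    cubicMonomials ξ ᵥ* Mmat w₁ w₂ p =
      cubicMonomials (fderiv ℂ (fun q => (w₁ q, w₂ q)) p ξ) := by
  rw [fderiv_prodMk_apply hw]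
  ext j
  simp only [vecMul, cubicMonomials_dotProduct]
  fin_cases j <;>
    simp only [Mmat, cubicMonomials, of_apply, cons_val, Fin.zero_eta, Fin.mk_one,
      Fin.reduceFinMk] <;> ring

theorem Mmat_mul_Mmat_comp (hw : DifferentiableAt ℂ (fun q => (w₁ q, w₂ q)) p)
    (hu : DifferentiableAt ℂ (fun q => (u₁ q, u₂ q)) (w₁ p, w₂ p)) :
    Mmat w₁ w₂ p * Mmat u₁ u₂ (w₁ p, w₂ p) =
      Mmat (fun q => u₁ (w₁ q, w₂ q)) (fun q => u₂ (w₁ q, w₂ q)) p := by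
  have huw : DifferentiableAt ℂ (fun q => (u₁ (w₁ q, w₂ q), u₂ (w₁ q, w₂ q))) p := hu.comp p hw
  refine eq_of_forall_cubicMonomials_vecMul_eq fun ξ => ?_
  rw [← vecMul_vecMul, cubicMonomials_vecMul_Mmat hw, cubicMonomials_vecMul_Mmat hu,
    cubicMonomials_vecMul_Mmat huw, fderiv_comp_prodMk_apply hw hu]

theorem cubicMonomials_dotProduct_Jac_smul_Vvec
    (hw : ContDiffAt ℂ 2 (fun q => (w₁ q, w₂ q)) p) (hJ : Jac w₁ w₂ p ≠ 0) (ξ : ℂ × ℂ) :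
    cubicMonomials ξ ⬝ᵥ (Jac w₁ w₂ p • Vvec w₁ w₂ p) =
      inflectionCubic (fun q => (w₁ q, w₂ q)) p ξ := by
  have h₁ : ContDiffAt ℂ 2 w₁ p := hw.fst
  have h₂ : ContDiffAt ℂ 2 w₂ p := hw.snd
  rw [inflectionCubic, fderiv_prodMk_apply (hw.differentiableAt two_ne_zero),
    fderiv_fderiv_prodMk_apply h₁ h₂, fderiv_fderiv_apply_self h₁, fderiv_fderiv_apply_self h₂,
    cubicMonomials_dotProduct]
  simp only [Vvec, Pi.smul_apply, cons_val, smul_eq_mul, brX, brY, sqX, sqY,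
    mul_div_cancel₀ _ hJ, areaForm]
  ring

theorem Jac_smul_Vvec_comp (hw : ContDiffAt ℂ 2 (fun q => (w₁ q, w₂ q)) p)
    (hu : ContDiffAt ℂ 2 (fun q => (u₁ q, u₂ q)) (w₁ p, w₂ p))
    (hJw : Jac w₁ w₂ p ≠ 0) (hJu : Jac u₁ u₂ (w₁ p, w₂ p) ≠ 0) :
    Jac (fun q => u₁ (w₁ q, w₂ q)) (fun q => u₂ (w₁ q, w₂ q)) p •
        Vvec (fun q => u₁ (w₁ q, w₂ q)) (fun q => u₂ (w₁ q, w₂ q)) p =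
      Mmat w₁ w₂ p *ᵥ (Jac u₁ u₂ (w₁ p, w₂ p) • Vvec u₁ u₂ (w₁ p, w₂ p)) +
        Jac u₁ u₂ (w₁ p, w₂ p) • (Jac w₁ w₂ p • Vvec w₁ w₂ p) := by
  have hdw := hw.differentiableAt two_ne_zero
  have hdu := hu.differentiableAt two_ne_zero
  have huw : ContDiffAt ℂ 2 (fun q => (u₁ (w₁ q, w₂ q), u₂ (w₁ q, w₂ q))) p := hu.comp p hw
  have hJ := (Jac_comp hdw hdu).trans_ne (mul_ne_zero hJu hJw)
  refine eq_of_forall_cubicMonomials_dotProduct_eq fun ξ => ?_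
  rw [dotProduct_add, dotProduct_mulVec, dotProduct_smul _ _ (Jac w₁ w₂ p • _),
    cubicMonomials_vecMul_Mmat hdw, cubicMonomials_dotProduct_Jac_smul_Vvec hw hJw,
    cubicMonomials_dotProduct_Jac_smul_Vvec hu hJu,
    cubicMonomials_dotProduct_Jac_smul_Vvec huw hJ, smul_eq_mul, Jac_eq_areaForm hdu]
  exact inflectionCubic_comp (Φ := fun q => (w₁ q, w₂ q)) hu hw ξ

theorem Umat_eq_reindex_fromBlocks (c : ℂ) :
    Umat c w₁ w₂ p = reindex (finSumFinEquiv (n := 1)) (finSumFinEquiv (n := 1))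
      (fromBlocks (Mmat w₁ w₂ p) (replicateCol (Fin 1) (c • (Jac w₁ w₂ p • Vvec w₁ w₂ p)))
        0 (Jac w₁ w₂ p • 1)) := by
  have hinl (i : Fin 4) : finSumFinEquiv (n := 1) (Sum.inl i) = i.castSucc := rfl
  have hinr (i : Fin 1) : finSumFinEquiv (m := 4) (Sum.inr i) = Fin.last 4 := by
    rw [Subsingleton.elim i 0]
    rfl
  rw [← Equiv.symm_apply_eq]
  ext i j
  rcases i with i | i <;> rcases j with j | j <;>
    simp [hinl, hinr, Umat, mul_assoc, one_apply, eq_iff_true_of_subsingleton]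

theorem Umat_mul_Umat_comp (c : ℂ) (hw : ContDiffAt ℂ 2 (fun q => (w₁ q, w₂ q)) p)
    (hu : ContDiffAt ℂ 2 (fun q => (u₁ q, u₂ q)) (w₁ p, w₂ p))
    (hJw : Jac w₁ w₂ p ≠ 0) (hJu : Jac u₁ u₂ (w₁ p, w₂ p) ≠ 0) :
    Umat c w₁ w₂ p * Umat c u₁ u₂ (w₁ p, w₂ p) =
      Umat c (fun q => u₁ (w₁ q, w₂ q)) (fun q => u₂ (w₁ q, w₂ q)) p := by
  have hdw := hw.differentiableAt two_ne_zero
  have hdu := hu.differentiableAt two_ne_zero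
  simp only [Umat_eq_reindex_fromBlocks, reindex_apply, submatrix_mul_equiv, fromBlocks_multiply]
  rw [Jac_smul_Vvec_comp hw hu hJw hJu, Jac_comp hdw hdu, ← Mmat_mul_Mmat_comp hdw hdu]
  congr 2
  · simp
  · rw [← replicateCol_mulVec, Matrix.mul_smul, Matrix.mul_one, ← replicateCol_smul,
      ← replicateCol_add, mulVec_smul, smul_add, smul_comm c (Jac u₁ u₂ _)]
  · simp
  · simp [smul_smul]

end PartialDerivatives
/-- Cocycle property of the block matrices `U`:
`U_Φ(p) · U_Ψ(Φ(p)) = U_{Ψ∘Φ}(p)`. -/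
theorem statement7 (c : ℂ) (Ω Ω' Ω'' : Set (ℂ × ℂ))
    (hΩ : IsOpen Ω) (hΩ' : IsOpen Ω') (hΩ'' : IsOpen Ω'')
    (w₁ w₂ : ℂ × ℂ → ℂ)
    (hw₁ : DifferentiableOn ℂ w₁ Ω) (hw₂ : DifferentiableOn ℂ w₂ Ω)
    (hmaps : ∀ p ∈ Ω, (w₁ p, w₂ p) ∈ Ω')
    (hDw : ∀ p ∈ Ω, Jac w₁ w₂ p ≠ 0)
    (u₁ u₂ : ℂ × ℂ → ℂ)
    (hu₁ : DifferentiableOn ℂ u₁ Ω') (hu₂ : DifferentiableOn ℂ u₂ Ω')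
    (hmaps' : ∀ q ∈ Ω', (u₁ q, u₂ q) ∈ Ω'')
    (hDu : ∀ q ∈ Ω', Jac u₁ u₂ q ≠ 0)
    (hDcomp : ∀ p ∈ Ω,
      Jac (fun q => u₁ (w₁ q, w₂ q)) (fun q => u₂ (w₁ q, w₂ q)) p ≠ 0) :
    ∀ p ∈ Ω,
      Umat c w₁ w₂ p * Umat c u₁ u₂ (w₁ p, w₂ p) =
        Umat c (fun q => u₁ (w₁ q, w₂ q)) (fun q => u₂ (w₁ q, w₂ q)) p := by
  intro p hp
  have hw : ContDiffAt ℂ 2 (fun q => (w₁ q, w₂ q)) p :=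
    (contDiffOn_of_differentiableOn_of_isOpen (hw₁.prodMk hw₂) hΩ 2).contDiffAt (hΩ.mem_nhds hp)
  have hu : ContDiffAt ℂ 2 (fun q => (u₁ q, u₂ q)) (w₁ p, w₂ p) :=
    (contDiffOn_of_differentiableOn_of_isOpen (hu₁.prodMk hu₂) hΩ' 2).contDiffAt
      (hΩ'.mem_nhds (hmaps p hp))
  exact Umat_mul_Umat_comp c hw hu (hDw p hp) (hDu _ (hmaps p hp))
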